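/- arXiv:2506.21836 — 4 statements merged into one kernel-verified Lean document; each statement's English description precedes it below -/
import Mathlib

section
/- If |X| ≥ 2, the lexicographic excellence solution R^L does not satisfy tops-only (TO): there exist ≿, ≿' ∈ ℛ(𝔛) with the same best equivalence class such that R^L_≿ ≠ R^L_{≿'}. -/
/-!
Social ranking solutions (SRSs).  The set of individuals is a finite type `X`;
coalitions are elements of `Finset X` (so the domain of a power relation is the
whole power set `𝔛 = 2^X`).  A weak order `≿ ∈ ℛ(𝔛)` is encoded as a relation
`r : Finset X → Finset X → Prop` together with (when needed) its list of
equivalence classes `L = [Σ₁, …, Σ_l]` in strictly decreasing order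
(`IsClassList r L`).
-/

namespace SocialRanking

variable {X : Type*} [Fintype X] [DecidableEq X]

/-- A weak order: a reflexive, complete and transitive binary relation. -/
def IsWeakOrder {A : Type*} (r : A → A → Prop) : Prop :=
  Reflexive r ∧ (∀ a b, r a b ∨ r b a) ∧ Transitive r

/-- A social ranking solution maps every weak order on `2^X` to a weak order on `X`. -/
def IsSRS (R : (Finset X → Finset X → Prop) → X → X → Prop) : Prop :=
  ∀ r, IsWeakOrder r → IsWeakOrder (R r)

/-- `IsClassList r L` : `L = [Σ₁, …, Σ_l]` is the list of the equivalence classes of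
the weak order `r` on `2^X`, in strictly decreasing order (`≿ : Σ₁ ≻ ⋯ ≻ Σ_l`):
every class is nonempty, every coalition lies in exactly one class, and
`S ≿ T ↔ i ≤ j` whenever `S ∈ Σᵢ` and `T ∈ Σⱼ` (0-based indices). -/
def IsClassList (r : Finset X → Finset X → Prop) (L : List (Finset (Finset X))) : Prop :=
  (∀ C ∈ L, C.Nonempty) ∧
  (∀ S : Finset X, ∃! i : ℕ, i < L.length ∧ S ∈ L.getD i ∅) ∧
  (∀ i j : ℕ, i < L.length → j < L.length →
    ∀ S ∈ L.getD i ∅, ∀ T ∈ L.getD j ∅, (r S T ↔ i ≤ j))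

/-- The asymmetric (strict) part `P` of a relation. -/
def StrictPart {A : Type*} (p : A → A → Prop) (a b : A) : Prop := p a b ∧ ¬ p b a

/-- The symmetric part `I` (indifference) of a relation. -/
def IndiffPart {A : Type*} (p : A → A → Prop) (a b : A) : Prop := p a b ∧ p b a

/-- The restrictions of `p` and `q` to `{x, y}` coincide. -/
def AgreeOn (p q : X → X → Prop) (x y : X) : Prop :=
  ∀ a ∈ ({x, y} : Set X), ∀ b ∈ ({x, y} : Set X), (p a b ↔ q a b)

/-- `|Δ[x]|` : the number of coalitions in `Δ` containing `x`. -/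
def count (Δ : Finset (Finset X)) (x : X) : ℕ := (Δ.filter (fun S => x ∈ S)).card

/-! ### Independence axioms and further axioms -/

/-- WIVIP: for a dichotomous `≿ : Σ₁ ≻ Σ₂`, any `x ∈ ⋂Σ₁` is socially strictly above
any `y ∉ ⋂Σ₁`. -/
def WIVIP (R : (Finset X → Finset X → Prop) → X → X → Prop) : Prop :=
  ∀ (r : Finset X → Finset X → Prop) (C₁ C₂ : Finset (Finset X)),
    IsClassList r [C₁, C₂] →
    ∀ x y : X, (∀ S ∈ C₁, x ∈ S) → (∃ S ∈ C₁, y ∉ S) →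
    StrictPart (R r) x y

/-- IWS (independence from the worst set): if `≿ : Σ₁ ≻ ⋯ ≻ Σ_{l-1} ≻ Σ_l` (`l ≥ 2`)
and `≿'` is obtained from `≿` by partitioning the worst class `Σ_l` into ordered
classes `Γ₁ ≻' ⋯ ≻' Γ_{l'}`, then `x P_≿ y` implies `x P_≿' y`. -/
def IWS (R : (Finset X → Finset X → Prop) → X → X → Prop) : Prop :=
  ∀ (r r' : Finset X → Finset X → Prop) (L Γ : List (Finset (Finset X)))
    (W : Finset (Finset X)),
    L ≠ [] → IsClassList r (L ++ [W]) → IsClassList r' (L ++ Γ) →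
    ∀ x y : X, StrictPart (R r) x y → StrictPart (R r') x y

/-- IBS (independence from the best set): if `≿ : Σ₁ ≻ Σ₂ ≻ ⋯ ≻ Σ_l` (`l ≥ 2`)
and `≿'` is obtained from `≿` by partitioning the best class `Σ₁` into ordered
classes `Γ₁ ≻' ⋯ ≻' Γ_{l'}`, then `x P_≿ y` implies `x P_≿' y`. -/
def IBS (R : (Finset X → Finset X → Prop) → X → X → Prop) : Prop :=
  ∀ (r r' : Finset X → Finset X → Prop) (B : Finset (Finset X))
    (L Γ : List (Finset (Finset X))),
    L ≠ [] → IsClassList r (B :: L) → IsClassList r' (Γ ++ L) →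
    ∀ x y : X, StrictPart (R r) x y → StrictPart (R r') x y

/-- TO (tops-only): two weak orders with the same best equivalence class get the
same social ranking. -/
def TO (R : (Finset X → Finset X → Prop) → X → X → Prop) : Prop :=
  ∀ (r r' : Finset X → Finset X → Prop) (B : Finset (Finset X))
    (L L' : List (Finset (Finset X))),
    IsClassList r (B :: L) → IsClassList r' (B :: L') → R r = R r'

/-- The class list obtained from `L` by sliding `Δ` out of class `k₁` into class `k₂`
(`Σ_{k₁}` is replaced by `Σ_{k₁} \ Δ` and `Σ_{k₂}` by `Σ_{k₂} ∪ Δ`; if `Δ = Σ_{k₁}`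
the emptied class disappears). -/
def slide (L : List (Finset (Finset X))) (k₁ k₂ : ℕ) (Δ : Finset (Finset X)) :
    List (Finset (Finset X)) :=
  ((L.set k₁ ((L.getD k₁ ∅) \ Δ)).set k₂ ((L.getD k₂ ∅) ∪ Δ)).filter
    (fun C => decide (C ≠ ∅))

/-- SI (slide independence): sliding a proper subfamily `Δ ⊊ Σ_{k₁}` with
`|Δ[x]| = |Δ[y]|` into another class does not change the social ranking on `{x, y}`. -/
def SI (R : (Finset X → Finset X → Prop) → X → X → Prop) : Prop :=
  ∀ (r r' : Finset X → Finset X → Prop) (L : List (Finset (Finset X)))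
    (k₁ k₂ : ℕ) (x y : X) (Δ : Finset (Finset X)),
    IsClassList r L → k₁ < L.length → k₂ < L.length →
    Δ ⊂ L.getD k₁ ∅ → count Δ x = count Δ y →
    IsClassList r' (slide L k₁ k₂ Δ) →
    AgreeOn (R r) (R r') x y

/-- SSI (strong slide independence): as SI, but `Δ ⊆ Σ_{k₁}` may be the whole class
(in which case the class disappears). -/
def SSI (R : (Finset X → Finset X → Prop) → X → X → Prop) : Prop :=
  ∀ (r r' : Finset X → Finset X → Prop) (L : List (Finset (Finset X)))
    (k₁ k₂ : ℕ) (x y : X) (Δ : Finset (Finset X)),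
    IsClassList r L → k₁ < L.length → k₂ < L.length →
    Δ ⊆ L.getD k₁ ∅ → count Δ x = count Δ y →
    IsClassList r' (slide L k₁ k₂ Δ) →
    AgreeOn (R r) (R r') x y

/-- Top-SI: the condition of SI restricted to slides out of the best class (`k₁ = 1`,
i.e. index `0`). -/
def TopSI (R : (Finset X → Finset X → Prop) → X → X → Prop) : Prop :=
  ∀ (r r' : Finset X → Finset X → Prop) (L : List (Finset (Finset X)))
    (k₂ : ℕ) (x y : X) (Δ : Finset (Finset X)),
    IsClassList r L → 0 < L.length → k₂ < L.length →
    Δ ⊂ L.getD 0 ∅ → count Δ x = count Δ y →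
    IsClassList r' (slide L 0 k₂ Δ) →
    AgreeOn (R r) (R r') x y

/-- The class list of `≿' : Σ₁ ≻' ⋯ ≻' Σ_{k-1} ≻' Δ ≻' Σ_k \ Δ ≻' ⋯ ≻' Σ_l`
(empty classes disappear). -/
def inuiList (L : List (Finset (Finset X))) (k : ℕ) (Δ : Finset (Finset X)) :
    List (Finset (Finset X)) :=
  (L.take k ++ [Δ, (L.getD k ∅) \ Δ] ++ L.drop (k + 1)).filter
    (fun C => decide (C ≠ ∅))

/-- INUI (independence of non-unanimous improvements). -/
def INUI (R : (Finset X → Finset X → Prop) → X → X → Prop) : Prop :=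
  ∀ (r r' : Finset X → Finset X → Prop) (L : List (Finset (Finset X)))
    (k : ℕ) (Δ : Finset (Finset X)) (x y : X),
    IsClassList r L → k < L.length → Δ ⊆ L.getD k ∅ →
    (∃ S ∈ Δ, x ∉ S) → (∃ S ∈ Δ, y ∉ S) →
    IsClassList r' (inuiList L k Δ) →
    AgreeOn (R r) (R r') x y

/-- The weak order `≿_π := {(π(S), π(T)) : S ≿ T}` induced by a permutation `π` of `X`. -/
def permRel (π : Equiv.Perm X) (r : Finset X → Finset X → Prop) :
    Finset X → Finset X → Prop :=
  fun A B => r (A.image π.symm) (B.image π.symm)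

/-- NT (neutrality). -/
def NT (R : (Finset X → Finset X → Prop) → X → X → Prop) : Prop :=
  ∀ (π : Equiv.Perm X) (r : Finset X → Finset X → Prop), IsWeakOrder r →
    ∀ x y : X, (R (permRel π r) (π x) (π y) ↔ R r x y)

/-- IIC (independence of irrelevant coalitions). -/
def IIC (R : (Finset X → Finset X → Prop) → X → X → Prop) : Prop :=
  ∀ (r r' : Finset X → Finset X → Prop), IsWeakOrder r → IsWeakOrder r' →
    ∀ x y : X,
      (∀ S : Finset X, x ∉ S → y ∉ S →
        (r (insert x S) (insert y S) ↔ r' (insert x S) (insert y S))) →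
      (R r x y ↔ R r' x y)

/-! ### The social ranking solutions -/

/-- `θ_≿(x) = (|Σ₁[x]|, …, |Σ_l[x]|)`. -/
def theta (L : List (Finset (Finset X))) (x : X) : List ℕ := L.map (fun C => count C x)

/-- The lexicographic order `a ≥^L b` on vectors of naturals. -/
def GeLex (a b : List ℕ) : Prop :=
  a = b ∨ ∃ k < a.length, (∀ j < k, a.getD j 0 = b.getD j 0) ∧ b.getD k 0 < a.getD k 0

/-- The dual lexicographic order `a ≥^DL b` (read from the last coordinate;
fewer appearances in worse classes is better). -/
def GeDualLex (a b : List ℕ) : Prop :=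
  a = b ∨ ∃ k < a.length, (∀ j, k < j → a.getD j 0 = b.getD j 0) ∧ a.getD k 0 < b.getD k 0

/-- The lexicographic excellence solution `R^L` : `x R^L_≿ y ↔ θ_≿(x) ≥^L θ_≿(y)`. -/
def RL (r : Finset X → Finset X → Prop) (x y : X) : Prop :=
  ∀ L, IsClassList r L → GeLex (theta L x) (theta L y)

/-- The dual lexicographic excellence solution `R^DL`. -/
def RDL (r : Finset X → Finset X → Prop) (x y : X) : Prop :=
  ∀ L, IsClassList r L → GeDualLex (theta L x) (theta L y)

/-- Plurality `R^P` : `x R^P_≿ y ↔ |Σ₁[x]| ≥ |Σ₁[y]|`. -/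
def RP (r : Finset X → Finset X → Prop) (x y : X) : Prop :=
  ∀ L, IsClassList r L → count (L.getD 0 ∅) y ≤ count (L.getD 0 ∅) x

/-- `e_≿(x)` : the largest `k` such that `x` belongs to every coalition of each of the
first `k` equivalence classes (`0` if `x ∉ T₁`). -/
def eIIS (L : List (Finset (Finset X))) (x : X) : ℕ :=
  (L.takeWhile (fun C => decide (∀ S ∈ C, x ∈ S))).length

/-- The intersection initial segment rule `R^IIS` : `x R^IIS_≿ y ↔ e_≿(x) ≥ e_≿(y)`. -/
def RIIS (r : Finset X → Finset X → Prop) (x y : X) : Prop :=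
  ∀ L, IsClassList r L → eIIS L y ≤ eIIS L x

/-- The constant-`X` rule: everybody is ranked indifferent. -/
def RconstX : (Finset X → Finset X → Prop) → X → X → Prop := fun _ _ _ => True

/-- The split-plurality score `s^split_≿(z) = ∑_{S ∈ Σ₁ : z ∈ S} 1/|S|`. -/
def splitScore (C : Finset (Finset X)) (z : X) : ℚ :=
  ∑ S ∈ C.filter (fun S => z ∈ S), (1 : ℚ) / (S.card : ℚ)

/-- Split-plurality `R^splitP`. -/
def RsplitP (r : Finset X → Finset X → Prop) (x y : X) : Prop :=
  ∀ L, IsClassList r L → splitScore (L.getD 0 ∅) y ≤ splitScore (L.getD 0 ∅) x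

/-- Plurality with tie-breaking by a linear order `t = ▷` :
`x R^{P,▷}_≿ y ↔ (x P^P_≿ y ∨ (x I^P_≿ y ∧ x ▷ y))`. -/
def RPtie (t : X → X → Prop) (r : Finset X → Finset X → Prop) (x y : X) : Prop :=
  ∀ L, IsClassList r L →
    (count (L.getD 0 ∅) y < count (L.getD 0 ∅) x ∨
      (count (L.getD 0 ∅) x = count (L.getD 0 ∅) y ∧ t x y))


/-!
Take `x ≠ y` and compare `{∅} ≻ {∅}ᶜ` with its refinement `{∅} ≻ {{y}} ≻ {∅, {y}}ᶜ`.
Every individual lies in the same number of coalitions overall, hence in the same number of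
nonempty ones, so lexcel ranks everyone indifferent in the first order; in the second one the
class `{{y}}` places `y` strictly above `x`.
-/

section Count

variable {α : Type*} [DecidableEq α]

theorem count_singleton (S : Finset α) (x : α) : count {S} x = if x ∈ S then 1 else 0 := by
  unfold count
  rw [Finset.filter_singleton, apply_ite Finset.card, Finset.card_singleton, Finset.card_empty]

theorem count_add_count_compl [Fintype α] (Δ : Finset (Finset α)) (x : α) :
    count Δ x + count Δᶜ x = count Finset.univ x := by
  unfold count
  rw [← Finset.card_union_of_disjoint (Finset.disjoint_filter_filter disjoint_compl_right),
    ← Finset.filter_union, Finset.union_compl]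

theorem count_univ_eq_count_univ [Fintype α] (x y : α) :
    count Finset.univ x = count Finset.univ y :=
  Finset.card_equiv (Equiv.swap x y).finsetCongr fun S => by
    simp [Finset.mem_map_equiv]

theorem count_compl_eq_count_compl [Fintype α] {Δ : Finset (Finset α)} {x y : α}
    (h : count Δ x = count Δ y) : count Δᶜ x = count Δᶜ y := by
  have hx := count_add_count_compl Δ x
  have hy := count_add_count_compl Δ y
  have hxy := count_univ_eq_count_univ x y
  omega

end Count

theorem geLex_cons_cons {a b : ℕ} {u v : List ℕ} :
    GeLex (a :: u) (b :: v) ↔ b < a ∨ a = b ∧ GeLex u v := by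
  constructor
  · rintro (heq | ⟨_ | k, hk, hpre, hlt⟩)
    · obtain ⟨hab, huv⟩ := List.cons.inj heq
      exact Or.inr ⟨hab, Or.inl huv⟩
    · exact Or.inl hlt
    · exact Or.inr ⟨hpre 0 k.succ_pos, Or.inr ⟨k, Nat.lt_of_succ_lt_succ hk,
        fun j hj => hpre (j + 1) (Nat.succ_lt_succ hj), hlt⟩⟩
  · rintro (hlt | ⟨rfl, rfl | ⟨k, hk, hpre, hlt⟩⟩)
    · exact Or.inr ⟨0, Nat.succ_pos _, fun j hj => absurd hj j.not_lt_zero, hlt⟩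
    · exact Or.inl rfl
    · refine Or.inr ⟨k + 1, Nat.succ_lt_succ hk, ?_, hlt⟩
      rintro (_ | j) hj
      · rfl
      · exact hpre j (Nat.lt_of_succ_lt_succ hj)

section ClassList

variable {α : Type*} {r : Finset α → Finset α → Prop} {L L' : List (Finset (Finset α))}
  {C : Finset (Finset α)} {S T : Finset α}

namespace IsClassList

theorem exists_mem_class (h : IsClassList r L) (S : Finset α) : ∃ C ∈ L, S ∈ C := by
  obtain ⟨i, ⟨hi, hS⟩, -⟩ := h.2.1 S
  rw [List.getD_eq_getElem _ _ hi] at hS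
  exact ⟨L[i], List.getElem_mem hi, hS⟩

theorem rel_iff (h : IsClassList r L) {i j : ℕ} (hi : i < L.length) (hj : j < L.length)
    (hS : S ∈ L[i]) (hT : T ∈ L[j]) : r S T ↔ i ≤ j := by
  rw [← List.getD_eq_getElem _ ∅ hi] at hS
  rw [← List.getD_eq_getElem _ ∅ hj] at hT
  exact h.2.2 i j hi hj S hS T hT

theorem rel_total (h : IsClassList r L) (S T : Finset α) : r S T ∨ r T S := by
  obtain ⟨C, hC, hS⟩ := h.exists_mem_class S
  obtain ⟨D, hD, hT⟩ := h.exists_mem_class T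
  obtain ⟨i, hi, rfl⟩ := List.getElem_of_mem hC
  obtain ⟨j, hj, rfl⟩ := List.getElem_of_mem hD
  exact (le_total i j).imp (h.rel_iff hi hj hS hT).2 (h.rel_iff hj hi hT hS).2

theorem mem_class_iff (h : IsClassList r L) (hC : C ∈ L) (hS : S ∈ C) :
    T ∈ C ↔ r S T ∧ r T S := by
  obtain ⟨i, hi, rfl⟩ := List.getElem_of_mem hC
  constructor
  · intro hT
    exact ⟨(h.rel_iff hi hi hS hT).2 le_rfl, (h.rel_iff hi hi hT hS).2 le_rfl⟩
  · rintro ⟨hST, hTS⟩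
    obtain ⟨D, hD, hT⟩ := h.exists_mem_class T
    obtain ⟨j, hj, rfl⟩ := List.getElem_of_mem hD
    obtain rfl : i = j :=
      le_antisymm ((h.rel_iff hi hj hS hT).1 hST) ((h.rel_iff hj hi hT hS).1 hTS)
    exact hT

theorem mem_iff (h : IsClassList r L) : C ∈ L ↔ ∃ S, ∀ T, T ∈ C ↔ r S T ∧ r T S := by
  constructor
  · intro hC
    obtain ⟨S, hS⟩ := h.1 C hC
    exact ⟨S, fun T => h.mem_class_iff hC hS⟩
  · rintro ⟨S, hC⟩
    obtain ⟨D, hD, hS⟩ := h.exists_mem_class S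
    have hCD : C = D := Finset.ext fun T => (hC T).trans (h.mem_class_iff hD hS).symm
    exact hCD ▸ hD

theorem pairwise_not_rel (h : IsClassList r L) :
    L.Pairwise fun C D => ∀ S ∈ C, ∀ T ∈ D, ¬ r T S :=
  List.pairwise_iff_getElem.2 fun _ _ hi hj hij _ hS _ hT hTS =>
    hij.not_ge ((h.rel_iff hj hi hT hS).1 hTS)

theorem nodup (h : IsClassList r L) : L.Nodup := by
  refine h.pairwise_not_rel.imp_of_mem fun {C D} hC _ hlt hCD => ?_
  subst hCD
  obtain ⟨S, hS⟩ := h.1 C hC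
  exact hlt S hS S hS ((h.mem_class_iff hC hS).1 hS).1

-- Both lists enumerate the equivalence classes of `r`, sorted by a relation that, by totality
-- of `r`, never holds in both directions between nonempty classes.
theorem unique (h : IsClassList r L) (h' : IsClassList r L') : L = L' := by
  have hperm : L.Perm L' :=
    (List.perm_ext_iff_of_nodup h.nodup h'.nodup).2 fun C => h.mem_iff.trans h'.mem_iff.symm
  refine hperm.eq_of_pairwise (fun C D hC hD hCD hDC => ?_) h.pairwise_not_rel h'.pairwise_not_rel
  obtain ⟨S, hS⟩ := h.1 C hC
  obtain ⟨T, hT⟩ := h'.1 D hD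
  exact ((h.rel_total S T).elim (hDC T hT S hS) (hCD S hS T hT)).elim

theorem rl_iff [DecidableEq α] (h : IsClassList r L) {x y : α} :
    RL r x y ↔ GeLex (theta L x) (theta L y) :=
  ⟨fun hR => hR L h, fun hge _ hL => h.unique hL ▸ hge⟩

end IsClassList

theorem not_rl_of_isClassList_cons_cons [DecidableEq α] {B : Finset (Finset α)}
    (h : IsClassList r (B :: C :: L)) {x y : α} (hB : count B x = count B y)
    (hC : count C x < count C y) : ¬ RL r x y := by
  simp only [h.rl_iff, theta, List.map_cons, geLex_cons_cons]
  omega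

theorem eq_of_mem_getD_of_pairwise_disjoint (hdisj : L.Pairwise Disjoint) {i j : ℕ}
    (hi : S ∈ L.getD i ∅) (hj : S ∈ L.getD j ∅) : i = j := by
  wlog hij : i < j generalizing i j
  · by_contra hne
    exact hne (this hj hi (by omega)).symm
  have hj_lt : j < L.length := by
    by_contra hj_ge
    rw [List.getD_eq_default _ _ (not_lt.1 hj_ge)] at hj
    exact Finset.notMem_empty S hj
  have hi_lt : i < L.length := hij.trans hj_lt
  rw [List.getD_eq_getElem _ _ hi_lt] at hi
  rw [List.getD_eq_getElem _ _ hj_lt] at hj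
  exact (Finset.disjoint_left.1 (List.pairwise_iff_getElem.1 hdisj i j hi_lt hj_lt hij) hi hj).elim

theorem exists_isClassList (hne : ∀ C ∈ L, C.Nonempty) (hdisj : L.Pairwise Disjoint)
    (hcover : ∀ S, ∃ C ∈ L, S ∈ C) : ∃ r, IsClassList r L := by
  refine ⟨fun S T => ∀ i j, S ∈ L.getD i ∅ → T ∈ L.getD j ∅ → i ≤ j, hne, fun S => ?_, ?_⟩
  · obtain ⟨C, hC, hS⟩ := hcover S
    obtain ⟨i, hi, rfl⟩ := List.getElem_of_mem hC
    rw [← List.getD_eq_getElem _ ∅ hi] at hS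
    exact ⟨i, ⟨hi, hS⟩, fun j hj => eq_of_mem_getD_of_pairwise_disjoint hdisj hj.2 hS⟩
  · intro i j _ _ S hS T hT
    refine ⟨fun hST => hST i j hS hT, fun hij i' j' hS' hT' => ?_⟩
    rwa [eq_of_mem_getD_of_pairwise_disjoint hdisj hS' hS,
      eq_of_mem_getD_of_pairwise_disjoint hdisj hT' hT]

end ClassList

section Complement

variable {α : Type*} [Fintype α] [DecidableEq α]

theorem exists_isClassList_pair_compl {B : Finset (Finset α)} (hB : B.Nonempty)
    (hBc : Bᶜ.Nonempty) : ∃ r, IsClassList r [B, Bᶜ] := by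
  apply exists_isClassList
  · simp [hB, hBc]
  · simp [disjoint_compl_right]
  · simp [em]

theorem exists_isClassList_triple_compl {B C : Finset (Finset α)} (hB : B.Nonempty)
    (hC : C.Nonempty) (hBC : Disjoint B C) (hrest : (B ∪ C)ᶜ.Nonempty) :
    ∃ r, IsClassList r [B, C, (B ∪ C)ᶜ] := by
  apply exists_isClassList
  · simp only [List.forall_mem_cons]
    exact ⟨hB, hC, hrest, List.forall_mem_nil _⟩
  · have hB_rest : Disjoint B (B ∪ C)ᶜ := disjoint_compl_right.mono_left Finset.subset_union_left
    have hC_rest : Disjoint C (B ∪ C)ᶜ := disjoint_compl_right.mono_left Finset.subset_union_right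
    simp only [List.pairwise_cons, List.forall_mem_cons]
    exact ⟨⟨hBC, hB_rest, List.forall_mem_nil _⟩, ⟨hC_rest, List.forall_mem_nil _⟩,
      List.forall_mem_nil _, List.Pairwise.nil⟩
  · intro S
    by_cases hS : S ∈ B <;> simp [hS, em]

theorem rl_of_isClassList_pair_compl {r : Finset α → Finset α → Prop} {B : Finset (Finset α)}
    (h : IsClassList r [B, Bᶜ]) {x y : α} (hB : count B x = count B y) : RL r x y := by
  refine h.rl_iff.2 (Or.inl ?_)
  simp only [theta, List.map_cons, List.map_nil, hB, count_compl_eq_count_compl hB]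

end Complement

/-- If `|X| ≥ 2`, the lexicographic excellence solution does not satisfy tops-only. -/
theorem lexcel_not_to (hX : 2 ≤ Fintype.card X) :
    ¬ TO (X := X) RL := by
  intro hTO
  obtain ⟨x, y, hxy⟩ := Fintype.exists_pair_of_one_lt_card hX
  have hcount_empty : count {∅} x = count {∅} y := by simp [count_singleton]
  have hcount_y : count {{y}} x < count {{y}} y := by simp [count_singleton, hxy]
  obtain ⟨r, hr⟩ := exists_isClassList_pair_compl (Finset.singleton_nonempty (∅ : Finset X))
    ⟨{x}, by simp⟩
  obtain ⟨r', hr'⟩ := exists_isClassList_triple_compl (B := {∅}) (C := {{y}})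
    (Finset.singleton_nonempty _) (Finset.singleton_nonempty _)
    (by simp) ⟨{x}, by simp [hxy]⟩
  have hRL : RL r = RL r' := hTO r r' _ _ _ hr hr'
  have hRL_xy : RL r x y := rl_of_isClassList_pair_compl hr hcount_empty
  exact not_rl_of_isClassList_cons_cons hr' hcount_empty hcount_y (hRL ▸ hRL_xy)

end SocialRanking
end

section
/- If |X| ≥ 3, the lexicographic excellence solution R^L does not satisfy independence from the best set (IBS): there exist ≿, ≿' ∈ ℛ(𝔛), where ≿' is obtained from ≿ by partitioning the best equivalence class of ≿ into ordered classes, and x, y ∈ X with x P^L_≿ y but not x P^L_{≿'} y. -/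
/-!
Social ranking solutions (SRSs).  The set of individuals is a finite type `X`;
coalitions are elements of `Finset X` (so the domain of a power relation is the
whole power set `𝔛 = 2^X`).  A weak order `≿ ∈ ℛ(𝔛)` is encoded as a relation
`r : Finset X → Finset X → Prop` together with (when needed) its list of
equivalence classes `L = [Σ₁, …, Σ_l]` in strictly decreasing order
(`IsClassList r L`).
-/

namespace SocialRanking

variable {X : Type*} [Fintype X] [DecidableEq X]

/-!
Lexcel compares individuals first by how often they occur in the best class. For distinct `x`, `y`,
`z`, let the best class be `{{y}, {x}, {x, z}}`: it contains `x` twice and `y` once, so `x` is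
ranked above `y`. Splitting it into `{{y}} ≻' {{x}, {x, z}}` puts `y` alone in the new best class
and reverses the ranking. To evaluate `RL` on these two orders one needs that a weak order
determines its list of classes: the index of a class is a rank function whose values form an
initial segment of `ℕ`, and such a function is determined by the order it induces.
-/

section OrderedPartition

theorem le_of_isLowerSet_range_of_lt_imp_lt {α β : Type*} [LinearOrder β] [WellFoundedLT β]
    {f g : α → β} (hf : IsLowerSet (Set.range f)) (hfg : ∀ a b, f a < f b → g a < g b) :
    f ≤ g := by
  intro a
  induction h : f a using WellFoundedLT.induction generalizing a with
  | ind _ ih =>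
    subst h
    by_contra! hlt
    obtain ⟨b, hb⟩ : g a ∈ Set.range f := hf hlt.le ⟨a, rfl⟩
    have hba : f b < f a := hb ▸ hlt
    exact (hfg b a hba).not_ge (hb ▸ ih (f b) hba b rfl)

variable {α : Type*} {L L' : List (Finset α)}

/-- An ordered partition of `α`: a list of nonempty, pairwise disjoint classes covering `α`. For
finite `α` these are the lists of equivalence classes, best first, of weak orders on `α`. -/
structure IsOrderedPartition (L : List (Finset α)) : Prop where
  nonempty : ∀ C ∈ L, C.Nonempty
  pairwise_disjoint : L.Pairwise Disjoint
  exists_mem : ∀ a, ∃ C ∈ L, a ∈ C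

open scoped Classical in
/-- The rank of `a` in the weak order with classes `L`: the 0-based position of the first class
containing `a`, or `L.length` if there is none. -/
noncomputable def classIndex (L : List (Finset α)) (a : α) : ℕ := L.findIdx (a ∈ ·)

namespace IsOrderedPartition

theorem classIndex_lt_length (hL : IsOrderedPartition L) (a : α) : classIndex L a < L.length := by
  simpa [classIndex, List.findIdx_lt_length] using hL.exists_mem a

theorem mem_getD_iff_classIndex_eq (hL : IsOrderedPartition L) {i : ℕ} (hi : i < L.length) {a : α} :
    a ∈ L.getD i ∅ ↔ classIndex L a = i := by
  rw [List.getD_eq_getElem _ _ hi, classIndex, List.findIdx_eq hi]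
  simp only [decide_eq_true_eq, decide_eq_false_iff_not, iff_self_and]
  intro ha j hji haj
  have hdisj : Disjoint L[j] L[i] :=
    List.pairwise_iff_getElem.mp hL.pairwise_disjoint j i (hji.trans hi) hi hji
  exact Finset.disjoint_left.mp hdisj haj ha

theorem range_classIndex (hL : IsOrderedPartition L) :
    Set.range (classIndex L) = Set.Iio L.length := by
  ext i
  refine ⟨?_, fun hi => ?_⟩
  · rintro ⟨a, rfl⟩
    exact hL.classIndex_lt_length a
  · obtain ⟨a, ha⟩ := hL.nonempty L[i] (List.getElem_mem hi)
    exact ⟨a, (hL.mem_getD_iff_classIndex_eq hi).mp (by rwa [List.getD_eq_getElem _ _ hi])⟩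

theorem ext_classIndex (hL : IsOrderedPartition L) (hL' : IsOrderedPartition L')
    (h : classIndex L = classIndex L') : L = L' := by
  have hlen : L.length = L'.length :=
    Set.Iio_injective (by rw [← hL.range_classIndex, h, hL'.range_classIndex])
  refine List.ext_getElem hlen fun i hi hi' => ?_
  ext a
  rw [← List.getD_eq_getElem L ∅ hi, ← List.getD_eq_getElem L' ∅ hi',
    hL.mem_getD_iff_classIndex_eq hi, hL'.mem_getD_iff_classIndex_eq hi', h]

theorem classIndex_le_of_lt_imp_lt (hL : IsOrderedPartition L)
    (h : ∀ a b, classIndex L a < classIndex L b → classIndex L' a < classIndex L' b) :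
    classIndex L ≤ classIndex L' :=
  le_of_isLowerSet_range_of_lt_imp_lt (hL.range_classIndex ▸ isLowerSet_Iio _) h

theorem pair_compl [Fintype α] [DecidableEq α] {C : Finset α} (hC : C.Nonempty)
    (hC' : C ≠ Finset.univ) : IsOrderedPartition [C, Cᶜ] where
  nonempty := by simpa [Finset.nonempty_iff_ne_empty, hC.ne_empty] using hC'
  pairwise_disjoint := by simpa using disjoint_compl_right
  exists_mem a := by simpa using em (a ∈ C)

theorem split_head [DecidableEq α] {A B : Finset α} (h : IsOrderedPartition ((A ∪ B) :: L))
    (hA : A.Nonempty) (hB : B.Nonempty) (hAB : Disjoint A B) :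
    IsOrderedPartition (A :: B :: L) where
  nonempty := by
    have := h.nonempty
    simp_all
  pairwise_disjoint := by
    have := h.pairwise_disjoint
    simp_all [Finset.disjoint_union_left]
  exists_mem a := by simpa [or_assoc] using h.exists_mem a

end IsOrderedPartition

end OrderedPartition

section ClassList

variable {ι : Type*} {r : Finset ι → Finset ι → Prop} {L L' : List (Finset (Finset ι))}

theorem IsClassList.isOrderedPartition (h : IsClassList r L) : IsOrderedPartition L where
  nonempty := h.1
  pairwise_disjoint := by
    refine List.pairwise_iff_getElem.mpr fun i j hi hj hij => Finset.disjoint_left.mpr ?_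
    intro S hSi hSj
    rw [← List.getD_eq_getElem L ∅] at hSi hSj
    exact hij.ne ((h.2.1 S).unique ⟨hi, hSi⟩ ⟨hj, hSj⟩)
  exists_mem S := by
    obtain ⟨i, ⟨hi, hS⟩, -⟩ := h.2.1 S
    exact ⟨L[i], List.getElem_mem hi, by rwa [List.getD_eq_getElem _ _ hi] at hS⟩

theorem IsClassList.rel_iff_s11 (h : IsClassList r L) (S T : Finset ι) :
    r S T ↔ classIndex L S ≤ classIndex L T := by
  have hL := h.isOrderedPartition
  have hS := hL.classIndex_lt_length S
  have hT := hL.classIndex_lt_length T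
  exact h.2.2 _ _ hS hT S ((hL.mem_getD_iff_classIndex_eq hS).mpr rfl)
    T ((hL.mem_getD_iff_classIndex_eq hT).mpr rfl)

theorem IsOrderedPartition.isClassList (hL : IsOrderedPartition L) :
    IsClassList (fun S T => classIndex L S ≤ classIndex L T) L := by
  refine ⟨hL.nonempty, fun S => ?_, fun i j hi hj S hS T hT => ?_⟩
  · have hS := hL.classIndex_lt_length S
    refine ⟨classIndex L S, ⟨hS, (hL.mem_getD_iff_classIndex_eq hS).mpr rfl⟩, ?_⟩
    rintro i ⟨hi, hSi⟩
    exact ((hL.mem_getD_iff_classIndex_eq hi).mp hSi).symm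
  · dsimp only
    rw [(hL.mem_getD_iff_classIndex_eq hi).mp hS, (hL.mem_getD_iff_classIndex_eq hj).mp hT]

theorem IsClassList.unique_s11 (h : IsClassList r L) (h' : IsClassList r L') : L = L' := by
  have hlt : ∀ S T, classIndex L S < classIndex L T ↔ classIndex L' S < classIndex L' T :=
    fun S T => by rw [← not_le, ← not_le, ← h.rel_iff_s11, ← h'.rel_iff_s11]
  exact h.isOrderedPartition.ext_classIndex h'.isOrderedPartition <| le_antisymm
    (h.isOrderedPartition.classIndex_le_of_lt_imp_lt fun S T => (hlt S T).mp)
    (h'.isOrderedPartition.classIndex_le_of_lt_imp_lt fun S T => (hlt S T).mpr)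

end ClassList

section Lexcel

theorem geLex_cons_cons_of_lt {m n : ℕ} (h : n < m) (a b : List ℕ) : GeLex (m :: a) (n :: b) :=
  Or.inr ⟨0, by simp, by simp, by simpa using h⟩

theorem le_of_geLex_cons_cons {m n : ℕ} {a b : List ℕ} (h : GeLex (m :: a) (n :: b)) : n ≤ m := by
  rcases h with heq | ⟨_ | k, -, hprefix, hlt⟩
  · exact (List.cons.inj heq).1.ge
  · exact le_of_lt (by simpa using hlt)
  · exact ge_of_eq (by simpa using hprefix 0 k.succ_pos)

variable {ι : Type*} [DecidableEq ι] {r : Finset ι → Finset ι → Prop}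
  {L : List (Finset (Finset ι))} {A B C : Finset (Finset ι)} {x y : ι}

theorem RL_iff_geLex (h : IsClassList r L) : RL r x y ↔ GeLex (theta L x) (theta L y) :=
  ⟨fun hR => hR L h, fun hge _ h' => h.unique_s11 h' ▸ hge⟩

theorem strictPart_RL_of_count_lt (h : IsClassList r (C :: L)) (hlt : count C y < count C x) :
    StrictPart (RL r) x y := by
  rw [StrictPart, RL_iff_geLex h, RL_iff_geLex h]
  exact ⟨geLex_cons_cons_of_lt hlt _ _, fun hge => (le_of_geLex_cons_cons hge).not_gt hlt⟩

theorem not_IBS_RL_of_count_lt [Fintype ι] (hAB : Disjoint A B) (hne : A ∪ B ≠ Finset.univ)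
    (hA : count A x < count A y) (hlt : count (A ∪ B) y < count (A ∪ B) x) :
    ¬ IBS (X := ι) RL := by
  intro hIBS
  have hA_ne : A.Nonempty := by
    rw [Finset.nonempty_iff_ne_empty]
    rintro rfl
    simp [count] at hA
  have hB_ne : B.Nonempty := by
    rw [Finset.nonempty_iff_ne_empty]
    rintro rfl
    exact hA.asymm (by simpa using hlt)
  have hcoarse : IsOrderedPartition [A ∪ B, (A ∪ B)ᶜ] := .pair_compl hA_ne.inl hne
  have hfine : IsOrderedPartition [A, B, (A ∪ B)ᶜ] := hcoarse.split_head hA_ne hB_ne hAB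
  have hxy := strictPart_RL_of_count_lt hcoarse.isClassList hlt
  have hyx := strictPart_RL_of_count_lt hfine.isClassList hA
  have hxy' := hIBS _ _ _ _ [A, B] (by simp) hcoarse.isClassList hfine.isClassList x y hxy
  exact hyx.2 hxy'.1

end Lexcel

/-- If `|X| ≥ 3`, the lexicographic excellence solution does not satisfy IBS. -/
theorem lexcel_not_ibs (hX : 3 ≤ Fintype.card X) :
    ¬ IBS (X := X) RL := by
  obtain ⟨x, y, z, hxy, hxz, hyz⟩ := Fintype.two_lt_card_iff.mp hX
  have hx_ne : ({x} : Finset X) ≠ {x, z} := by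
    rw [Finset.pair_comm]
    exact Finset.ne_insert_of_notMem _ _ (by simpa using hxz.symm)
  have hy_ne : ({y} : Finset X) ≠ {x, z} :=
    Finset.ne_insert_of_notMem _ _ (by simpa using hxy)
  refine not_IBS_RL_of_count_lt (A := {{y}}) (B := {{x}, {x, z}}) (x := x) (y := y) ?_ ?_ ?_ ?_
  · simp [hxy.symm, hy_ne]
  · exact (ne_of_mem_of_not_mem' (Finset.mem_univ ∅)
      (by simp [(Finset.insert_ne_empty x {z}).symm])).symm
  · simp [count, Finset.filter_singleton, hxy]
  · simp [count, Finset.filter_insert, Finset.filter_singleton, hxy, hxy.symm, hyz, hx_ne]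

end SocialRanking
end

section
/- If |X| ≥ 3, the intersection initial segment rule R^IIS satisfies none of slide independence (SI), strong slide independence (SSI), and independence of irrelevant coalitions (IIC). -/
/-!
Social ranking solutions (SRSs).  The set of individuals is a finite type `X`;
coalitions are elements of `Finset X` (so the domain of a power relation is the
whole power set `𝔛 = 2^X`).  A weak order `≿ ∈ ℛ(𝔛)` is encoded as a relation
`r : Finset X → Finset X → Prop` together with (when needed) its list of
equivalence classes `L = [Σ₁, …, Σ_l]` in strictly decreasing order
(`IsClassList r L`).
-/

namespace SocialRanking

variable {X : Type*} [Fintype X] [DecidableEq X]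

/-!
Fix distinct individuals `x` and `y`. If `{x}` is the only best coalition, `x` is strictly above
`y`. Once `∅` is also a best coalition nobody belongs to every best coalition, so all individuals
are indifferent. Raising `∅` into the best class therefore changes the social ranking of `x` and
`y`, yet it is a slide with `|Δ[x]| = |Δ[y]| = 0`, and the comparisons of `S ∪ {x}` with `S ∪ {y}`
that IIC looks at never involve `∅`.
-/

section IIS

variable {r : Finset X → Finset X → Prop} {C : Finset (Finset X)} {L : List (Finset (Finset X))}
  {S : Finset X} {x y : X}

omit [Fintype X] [DecidableEq X] in
theorem IsClassList.mem_head (hL : IsClassList r (C :: L)) (hS : ∀ T, r S T) : S ∈ C := by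
  obtain ⟨nonempty_classes, existsUnique_class, rel_iff⟩ := hL
  obtain ⟨T, hT⟩ := nonempty_classes C List.mem_cons_self
  obtain ⟨i, ⟨hi, hSi⟩, -⟩ := existsUnique_class S
  have hi_le : i ≤ 0 := (rel_iff i 0 hi (by simp) S hSi T hT).1 (hS T)
  obtain rfl := Nat.le_zero.1 hi_le
  exact hSi

theorem eIIS_cons_eq_zero_iff : eIIS (C :: L) x = 0 ↔ ∃ S ∈ C, x ∉ S := by
  simp [eIIS, List.takeWhile_cons, apply_ite List.length]

theorem riis_of_notMem_best (hS : ∀ T, r S T) (hy : y ∉ S) : RIIS r x y := by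
  intro L hL
  cases L with
  | nil => rfl
  | cons C L => simp [eIIS_cons_eq_zero_iff.2 ⟨S, hL.mem_head hS, hy⟩]

theorem not_riis_of_forall_mem_head (hL : IsClassList r (C :: L)) (hy : ∀ S ∈ C, y ∈ S)
    (hx : ∃ S ∈ C, x ∉ S) : ¬ RIIS r x y := by
  intro h
  have hey : eIIS (C :: L) y = 0 :=
    Nat.le_zero.1 ((h _ hL).trans_eq (eIIS_cons_eq_zero_iff.2 hx))
  obtain ⟨S, hS, hyS⟩ := eIIS_cons_eq_zero_iff.1 hey
  exact hyS (hy S hS)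

end IIS

/-- The dichotomous weak order `C ≻ 2^X \ C` with best class `C`. It has a single class when `C` is
empty or contains every coalition. -/
def dichotomous (C : Finset (Finset X)) (S T : Finset X) : Prop := S ∈ C ∨ T ∉ C

section Dichotomous

variable {C Δ : Finset (Finset X)} {x y : X}

omit [Fintype X] [DecidableEq X] in
theorem isWeakOrder_dichotomous (C : Finset (Finset X)) : IsWeakOrder (dichotomous C) := by
  refine ⟨fun S => ?_, fun S T => ?_, fun S T U => ?_⟩ <;> unfold dichotomous <;> tauto

theorem isClassList_dichotomous (hC : C.Nonempty) (hC' : Cᶜ.Nonempty) :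
    IsClassList (dichotomous C) [C, Cᶜ] := by
  refine ⟨by simp [hC, hC'], fun S => ?_, fun i j hi hj S hS T hT => ?_⟩
  · by_cases hS : S ∈ C
    · refine ⟨0, by simp [hS], ?_⟩
      rintro (_ | _ | i) ⟨hi, hSi⟩ <;> simp_all
    · refine ⟨1, by simp [hS], ?_⟩
      rintro (_ | _ | i) ⟨hi, hSi⟩ <;> simp_all
  · simp only [List.length_cons, List.length_nil] at hi hj
    interval_cases i <;> interval_cases j <;> simp_all [dichotomous]

omit [Fintype X] in
theorem dichotomous_union_singleton_empty_iff {S T : Finset X} (hS : S.Nonempty)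
    (hT : T.Nonempty) : dichotomous (C ∪ {∅}) S T ↔ dichotomous C S T := by
  simp [dichotomous, hS.ne_empty, hT.ne_empty]

theorem slide_compl_head (hC : C.Nonempty) (hΔ : (C ∪ Δ)ᶜ.Nonempty) :
    slide [C, Cᶜ] 1 0 Δ = [C ∪ Δ, (C ∪ Δ)ᶜ] := by
  have hsdiff : Cᶜ \ Δ = (C ∪ Δ)ᶜ := by
    rw [Finset.compl_union, Finset.sdiff_eq_inter_compl]
  have hunion : C ∪ Δ ≠ ∅ := (hC.mono Finset.subset_union_left).ne_empty
  simp only [slide, List.getD_cons_succ, List.getD_cons_zero, List.set_cons_succ,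
    List.set_cons_zero, hsdiff, List.filter_cons, List.filter_nil, ne_eq, hunion, hΔ.ne_empty,
    not_false_eq_true, decide_true, if_true]

theorem riis_dichotomous_of_empty_mem (hC : ∅ ∈ C) (x y : X) : RIIS (dichotomous C) x y :=
  riis_of_notMem_best (fun _ => Or.inl hC) (Finset.notMem_empty y)

theorem not_riis_dichotomous_singleton (hxy : x ≠ y) : ¬ RIIS (dichotomous {{x}}) y x :=
  not_riis_of_forall_mem_head
    (isClassList_dichotomous (Finset.singleton_nonempty _) ⟨{y}, by simp [hxy.symm]⟩)
    (by simp) (by simp [hxy.symm])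

end Dichotomous

omit [Fintype X] in
theorem SSI.si {R : (Finset X → Finset X → Prop) → X → X → Prop} (h : SSI R) : SI R :=
  fun r r' L k₁ k₂ x y Δ hL hk₁ hk₂ hΔ => h r r' L k₁ k₂ x y Δ hL hk₁ hk₂ hΔ.subset

theorem not_si_riis [Nontrivial X] : ¬ SI (X := X) RIIS := by
  intro hSI
  obtain ⟨x, y, hxy⟩ := exists_pair_ne X
  have hx : ({{x}} : Finset (Finset X)).Nonempty := Finset.singleton_nonempty _
  have hy : {y} ∈ ({{x}} ∪ {∅} : Finset (Finset X))ᶜ := by simp [hxy.symm]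
  have hL : IsClassList (dichotomous {{x}}) [{{x}}, ({{x}} : Finset (Finset X))ᶜ] :=
    isClassList_dichotomous hx ⟨{y}, by simp [hxy.symm]⟩
  have hslide : IsClassList (dichotomous ({{x}} ∪ {∅}))
      (slide [{{x}}, ({{x}} : Finset (Finset X))ᶜ] 1 0 {∅}) := by
    rw [slide_compl_head hx ⟨_, hy⟩]
    exact isClassList_dichotomous (hx.mono Finset.subset_union_left) ⟨_, hy⟩
  have hempty : ({∅} : Finset (Finset X)) ⊂ {{x}}ᶜ :=
    (Finset.ssubset_iff_of_subset (by simp)).2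
      ⟨{y}, by simp [hxy.symm], by simp⟩
  have hcount : count ({∅} : Finset (Finset X)) x = count {∅} y := by
    simp [count, Finset.filter_singleton]
  have hagree : AgreeOn (RIIS (dichotomous {{x}})) (RIIS (dichotomous ({{x}} ∪ {∅}))) x y :=
    hSI _ _ _ 1 0 x y {∅} hL (by simp) (by simp) hempty hcount hslide
  exact not_riis_dichotomous_singleton hxy
    ((hagree y (by simp) x (by simp)).2 (riis_dichotomous_of_empty_mem (by simp) y x))

theorem not_iic_riis [Nontrivial X] : ¬ IIC (X := X) RIIS := by
  intro hIIC
  obtain ⟨x, y, hxy⟩ := exists_pair_ne X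
  have hagree : RIIS (dichotomous {{x}}) y x ↔ RIIS (dichotomous ({{x}} ∪ {∅})) y x :=
    hIIC _ _ (isWeakOrder_dichotomous _) (isWeakOrder_dichotomous _) y x fun S _ _ =>
      (dichotomous_union_singleton_empty_iff (Finset.insert_nonempty y S)
        (Finset.insert_nonempty x S)).symm
  exact not_riis_dichotomous_singleton hxy
    (hagree.2 (riis_dichotomous_of_empty_mem (by simp) y x))

theorem iis_not_si_ssi_iic_general [Nontrivial X] :
    ¬ SI (X := X) RIIS ∧ ¬ SSI (X := X) RIIS ∧ ¬ IIC (X := X) RIIS :=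
  ⟨not_si_riis, fun h => not_si_riis h.si, not_iic_riis⟩

/-- If `|X| ≥ 3`, the intersection initial segment rule satisfies none of SI, SSI
and IIC. -/
theorem iis_not_si_ssi_iic (hX : 3 ≤ Fintype.card X) :
    ¬ SI (X := X) RIIS ∧ ¬ SSI (X := X) RIIS ∧ ¬ IIC (X := X) RIIS := by
  have : Nontrivial X := Fintype.one_lt_card_iff_nontrivial.1 (by omega)
  exact iis_not_si_ssi_iic_general

end SocialRanking
end

section
/- If |X| ≥ 2, the plurality SRS R^P satisfies neither strong slide independence (SSI) nor independence from the best set (IBS). -/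
/-!
Social ranking solutions (SRSs).  The set of individuals is a finite type `X`;
coalitions are elements of `Finset X` (so the domain of a power relation is the
whole power set `𝔛 = 2^X`).  A weak order `≿ ∈ ℛ(𝔛)` is encoded as a relation
`r : Finset X → Finset X → Prop` together with (when needed) its list of
equivalence classes `L = [Σ₁, …, Σ_l]` in strictly decreasing order
(`IsClassList r L`).
-/

namespace SocialRanking

variable {X : Type*} [Fintype X] [DecidableEq X]

/-!
Let the empty coalition be the unique best one and `{x}` the unique second best. The empty
coalition contains nobody, so plurality ties `x` and `y`; once the two best classes are merged,
`x` is strictly above `y`. Read in one direction the merger slides a whole class which counts `x`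
and `y` equally often, against SSI; read backwards it partitions a best class, against IBS.
-/

section OrderedPartition

variable {α : Type*}

/-- The ordered partitions `Σ₁, …, Σ_l` of `α` into nonempty classes, as lists. Applied to
`α = Finset X`, these are the lists which arise as the equivalence classes of a weak order. -/
structure IsOrderedPartition_s14 (L : List (Finset α)) : Prop where
  nonempty : ∀ C ∈ L, C.Nonempty
  pairwise_disjoint : L.Pairwise Disjoint
  exists_mem : ∀ a, ∃ C ∈ L, a ∈ C

variable [DecidableEq α] {A B : Finset α} {L : List (Finset α)} {a : α} {i : ℕ}

/-- The weak order with equivalence classes `L`, best class first. An element outside all the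
classes has index `L.length`, so it is placed below all of them. -/
def classRel (L : List (Finset α)) (a b : α) : Prop :=
  L.findIdx (a ∈ ·) ≤ L.findIdx (b ∈ ·)

theorem IsOrderedPartition_s14.findIdx_lt_length (hL : IsOrderedPartition_s14 L) (a : α) :
    L.findIdx (a ∈ ·) < L.length := by
  simpa only [List.findIdx_lt_length, decide_eq_true_eq] using hL.exists_mem a

theorem IsOrderedPartition_s14.mem_getD_iff (hL : IsOrderedPartition_s14 L) (hi : i < L.length) :
    a ∈ L.getD i ∅ ↔ L.findIdx (a ∈ ·) = i := by
  rw [List.getD_eq_getElem _ _ hi, List.findIdx_eq hi]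
  simp only [decide_eq_true_eq, decide_eq_false_iff_not, iff_self_and]
  intro ha j hji haj
  exact Finset.disjoint_left.1
    (List.pairwise_iff_getElem.1 hL.pairwise_disjoint j i _ hi hji) haj ha

theorem IsOrderedPartition_s14.merge_head (hL : IsOrderedPartition_s14 (A :: B :: L)) :
    IsOrderedPartition_s14 ((B ∪ A) :: L) := by
  obtain ⟨hne, hdisj, hcover⟩ := hL
  simp only [List.pairwise_cons, List.forall_mem_cons, List.exists_mem_cons_iff] at hne hdisj hcover
  obtain ⟨⟨-, hAL⟩, hBL, hLL⟩ := hdisj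
  refine ⟨?_, ?_, fun a => ?_⟩
  · exact List.forall_mem_cons.2 ⟨hne.1.inr, hne.2.2⟩
  · exact List.pairwise_cons.2
      ⟨fun C hC => Finset.disjoint_union_left.2 ⟨hBL C hC, hAL C hC⟩, hLL⟩
  · rw [List.exists_mem_cons_iff, Finset.mem_union, or_comm (a := a ∈ B), or_assoc]
    exact hcover a

end OrderedPartition

section Plurality

variable {ι : Type*} {r : Finset ι → Finset ι → Prop} {A B : Finset (Finset ι)}
  {L : List (Finset (Finset ι))} {x y : ι}

theorem IsClassList.mem_getD_zero_iff (h : IsClassList r L) {S : Finset ι} :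
    S ∈ L.getD 0 ∅ ↔ ∀ T, r S T := by
  obtain ⟨hne, hclass, hr⟩ := h
  obtain ⟨i, ⟨hi, hSi⟩, -⟩ := hclass S
  have hpos : 0 < L.length := Nat.zero_lt_of_lt hi
  constructor
  · intro hS T
    obtain ⟨j, ⟨hj, hTj⟩, -⟩ := hclass T
    exact (hr 0 j hpos hj S hS T hTj).2 j.zero_le
  · intro hS
    obtain ⟨T, hT⟩ : (L.getD 0 ∅).Nonempty := by
      rw [List.getD_eq_getElem _ _ hpos]
      exact hne _ (List.getElem_mem hpos)
    obtain rfl : i = 0 := Nat.le_zero.1 ((hr i 0 hi hpos S hSi T hT).1 (hS T))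
    exact hSi

variable [DecidableEq ι]

theorem IsClassList.RP_iff (h : IsClassList r L) :
    RP r x y ↔ count (L.getD 0 ∅) y ≤ count (L.getD 0 ∅) x := by
  refine ⟨fun hxy => hxy L h, fun hxy L' h' => ?_⟩
  have hbest : L'.getD 0 ∅ = L.getD 0 ∅ := by
    ext S
    rw [h'.mem_getD_zero_iff, h.mem_getD_zero_iff]
  rwa [hbest]

theorem IsOrderedPartition_s14.isClassList (hL : IsOrderedPartition_s14 L) :
    IsClassList (classRel L) L := by
  refine ⟨hL.nonempty, fun S => ?_, fun i j hi hj S hS T hT => ?_⟩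
  · have hlt := hL.findIdx_lt_length S
    exact ⟨_, ⟨hlt, (hL.mem_getD_iff hlt).2 rfl⟩,
      fun j hj => ((hL.mem_getD_iff hj.1).1 hj.2).symm⟩
  · rw [classRel, (hL.mem_getD_iff hi).1 hS, (hL.mem_getD_iff hj).1 hT]

theorem IsOrderedPartition_s14.RP_classRel_cons_iff (hL : IsOrderedPartition_s14 (A :: L)) :
    RP (classRel (A :: L)) x y ↔ count A y ≤ count A x :=
  hL.isClassList.RP_iff

theorem count_union_of_disjoint (hAB : Disjoint A B) (x : ι) :
    count (A ∪ B) x = count A x + count B x := by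
  simp only [count, Finset.filter_union]
  exact Finset.card_union_of_disjoint (Finset.disjoint_filter_filter hAB)

theorem slide_zero_one_self (hA : A.Nonempty) (hL : ∀ C ∈ L, C.Nonempty) :
    slide (A :: B :: L) 0 1 A = (B ∪ A) :: L := by
  have hL_ne : ∀ C ∈ L, C ≠ ∅ := fun C hC => (hL C hC).ne_empty
  simpa [slide, hA.ne_empty] using hL_ne

theorem IsOrderedPartition_s14.RP_of_count_eq (hL : IsOrderedPartition_s14 (A :: L))
    (hA : count A x = count A y) : RP (classRel (A :: L)) x y :=
  hL.RP_classRel_cons_iff.2 hA.ge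

theorem IsOrderedPartition_s14.strictPart_RP_merge_head (hL : IsOrderedPartition_s14 (A :: B :: L))
    (hA : count A x = count A y) (hB : count B y < count B x) :
    StrictPart (RP (classRel ((B ∪ A) :: L))) x y := by
  have hBA : Disjoint B A := (List.rel_of_pairwise_cons hL.pairwise_disjoint (by simp)).symm
  have hcount : count (B ∪ A) y < count (B ∪ A) x := by
    simpa only [count_union_of_disjoint hBA, hA, add_lt_add_iff_right] using hB
  simpa only [StrictPart, hL.merge_head.RP_classRel_cons_iff, not_le] using
    And.intro hcount.le hcount

theorem IsOrderedPartition_s14.not_SSI_RP (hL : IsOrderedPartition_s14 (A :: B :: L))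
    (hA : count A x = count A y) (hB : count B y < count B x) : ¬ SSI (X := ι) RP := by
  intro hSSI
  have hslide : IsClassList (classRel ((B ∪ A) :: L)) (slide (A :: B :: L) 0 1 A) := by
    rw [slide_zero_one_self (hL.nonempty A (by simp)) fun C hC => hL.nonempty C (by simp [hC])]
    exact hL.merge_head.isClassList
  have hagree := hSSI _ _ (A :: B :: L) 0 1 x y A hL.isClassList (by simp) (by simp)
    subset_rfl hA hslide
  exact (hL.strictPart_RP_merge_head hA hB).2
    ((hagree y (by simp) x (by simp)).1 (hL.RP_of_count_eq hA.symm))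

theorem IsOrderedPartition_s14.not_IBS_RP (hL : IsOrderedPartition_s14 (A :: B :: L)) (hne : L ≠ [])
    (hA : count A x = count A y) (hB : count B y < count B x) : ¬ IBS (X := ι) RP := by
  intro hIBS
  have hstrict := hIBS _ _ (B ∪ A) L [A, B] hne hL.merge_head.isClassList hL.isClassList x y
    (hL.strictPart_RP_merge_head hA hB)
  exact hstrict.2 (hL.RP_of_count_eq hA.symm)

end Plurality

theorem isOrderedPartition_empty_singleton_compl {x y : X} (hxy : x ≠ y) :
    IsOrderedPartition_s14 [{∅}, {{x}}, ({∅, {x}} : Finset (Finset X))ᶜ] where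
  nonempty := by
    have hy : {y} ∈ ({∅, {x}} : Finset (Finset X))ᶜ := by simp [hxy.symm]
    simp only [List.forall_mem_cons, List.not_mem_nil, IsEmpty.forall_iff, implies_true,
      Finset.singleton_nonempty, true_and, and_true]
    exact ⟨_, hy⟩
  pairwise_disjoint := by simp [(Finset.singleton_ne_empty x).symm]
  exists_mem S := by
    simp only [List.exists_mem_cons_iff, Finset.mem_singleton, Finset.mem_compl,
      Finset.mem_insert]
    tauto

/-- If `|X| ≥ 2`, plurality satisfies neither SSI nor IBS. -/
theorem plurality_not_ssi_ibs (hX : 2 ≤ Fintype.card X) :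
    ¬ SSI (X := X) RP ∧ ¬ IBS (X := X) RP := by
  obtain ⟨x, y, hxy⟩ := Fintype.one_lt_card_iff.1 hX
  have hL := isOrderedPartition_empty_singleton_compl hxy
  have hcount_empty : count {∅} x = count {∅} y := by simp [count, Finset.filter_singleton]
  have hcount_singleton : count {{x}} y < count {{x}} x := by
    simp [count, Finset.filter_singleton, hxy.symm]
  exact ⟨hL.not_SSI_RP hcount_empty hcount_singleton,
    hL.not_IBS_RP (List.cons_ne_nil _ _) hcount_empty hcount_singleton⟩

end SocialRanking
end
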